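/- arXiv:2503.19493 — 2 statements merged into one kernel-verified Lean document; each statement's English description precedes it below -/
import Mathlib

section
/- Let A be a nonempty finite set, γ > 0, 0 < ε ≤ 1/2 with |A| ≥ 2, δ = ε²/|A|, Δ(ε) = {x ∈ Δ(A) : x(a) ≥ δ for all a}, and let f: Δ(ε) → ℝ^A be continuous. Then there exists x ∈ Δ(ε) such that for all a', a'' ∈ A: f_{a''}(x) − f_{a'}(x) > γ implies x(a') ≤ ε. -/
/-
If the standard simplex is covered by closed sets `C i`, one for each coordinate, some point lies
in `C i` for every `i` in its support. Taking for `C i` the points where `f i` is the largest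
coordinate of `f` gives a point whose support consists of maximisers; carried over to the truncated
simplex by an affine map, it puts only the minimal weight on every other action.

The covering theorem follows Scarf. Rank the points of a finite net by each of their coordinates
and call a set of them dominant if no point of the net is above its minimum in all rankings. Once
a slack point is added for each coordinate, the dominant sets of maximal size together with the set
of slack points behave like the facets of a triangulated sphere, so Sperner's parity argument,
applied to the colouring of the net by the cover, turns the rainbow set of slack points into a
second rainbow set. Its points of the net are close together, and each coordinate whose colour is
missing from them is small there.
-/

section Sperner

open Finset

variable {X I : Type*} [Fintype I] [DecidableEq I] {c : X → I} {i₀ i : I} {R S S' : Finset X}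
  {x x' : X}

/-- The sets which the colouring `c` maps bijectively onto all the colours but `i₀`: the doors
between rooms in the parity argument for Sperner's lemma. Bijectivity is encoded by the
cardinality. -/
def IsDoor (c : X → I) (i₀ : I) (S : Finset X) : Prop :=
  S.image c = univ.erase i₀ ∧ #S + 1 = Fintype.card I

instance : DecidablePred (IsDoor c i₀) := fun _ => inferInstanceAs (Decidable (_ ∧ _))

theorem IsDoor.injOn (hS : IsDoor c i₀ S) : Set.InjOn c S := by
  rw [← card_image_iff, hS.1, card_erase_of_mem (mem_univ _), card_univ, ← hS.2,
    Nat.add_sub_cancel]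

theorem IsDoor.exists_mem_color_eq (hS : IsDoor c i₀ S) (hi : i ≠ i₀) : ∃ x ∈ S, c x = i := by
  rw [← mem_image, hS.1]
  exact mem_erase.2 ⟨hi, mem_univ i⟩

theorem IsDoor.color_ne (hS : IsDoor c i₀ S) (hx : x ∈ S) : c x ≠ i₀ :=
  ne_of_mem_erase (hS.1 ▸ mem_image_of_mem c hx)

section DecidableEq

variable [DecidableEq X]

protected theorem IsDoor.erase_insert (hS : IsDoor c i₀ S) (hx : x ∉ S) (hx' : x' ∈ S)
    (hcol : c x' = c x) : IsDoor c i₀ ((insert x S).erase x') := by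
  have hne : x ≠ x' := fun h => hx (h ▸ hx')
  refine ⟨?_, ?_⟩
  · rw [erase_insert_of_ne hne, image_insert, ← hcol, ← image_insert, insert_erase hx', hS.1]
  · rw [card_erase_of_mem (mem_insert_of_mem hx'), card_insert_of_notMem hx, Nat.add_sub_cancel,
      hS.2]

theorem IsDoor.exists_eq_erase_insert (hS : IsDoor c i₀ S) (hS' : IsDoor c i₀ S') (hx : x ∉ S)
    (hsub : S' ⊆ insert x S) (hne : S' ≠ S) :
    ∃ x' ∈ S, c x' = c x ∧ S' = (insert x S).erase x' := by
  have hcard : #S' + 1 = #(insert x S) := by rw [card_insert_of_notMem hx, hS.2, hS'.2]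
  obtain ⟨x', hx', hins⟩ := exists_eq_insert_iff.2 ⟨hsub, hcard⟩
  have hS'eq : S' = (insert x S).erase x' := by rw [← hins, erase_insert hx']
  have hx'S : x' ∈ S := by
    refine mem_of_mem_insert_of_ne (hins ▸ mem_insert_self x' S') ?_
    rintro rfl
    exact hne (by rw [hS'eq, erase_insert hx])
  -- The colour of `x'` must reappear in `S'`, and only `x` can carry it.
  obtain ⟨z, hz, hzc⟩ := hS'.exists_mem_color_eq (hS.color_ne hx'S)
  obtain ⟨hzx', hzins⟩ := mem_erase.1 (hS'eq ▸ hz)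
  rcases mem_insert.1 hzins with rfl | hzS
  · exact ⟨x', hx'S, hzc.symm, hS'eq⟩
  · exact absurd (hS.injOn hzS hx'S hzc) hzx'

theorem IsDoor.filter_powerset_insert_of_eq (hS : IsDoor c i₀ S) (hx : x ∉ S) (hcx : c x = i₀) :
    {S' ∈ (insert x S).powerset | IsDoor c i₀ S'} = {S} := by
  refine eq_singleton_iff_unique_mem.2
    ⟨mem_filter.2 ⟨mem_powerset.2 (subset_insert x S), hS⟩, fun S' hS' => ?_⟩
  obtain ⟨hsub, hS'⟩ := mem_filter.1 hS'
  by_contra hne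
  obtain ⟨x', hx', hcol, -⟩ := hS.exists_eq_erase_insert hS' hx (mem_powerset.1 hsub) hne
  exact hS.color_ne hx' (hcol.trans hcx)

theorem IsDoor.card_filter_powerset_insert_of_ne (hS : IsDoor c i₀ S) (hx : x ∉ S)
    (hcx : c x ≠ i₀) : #{S' ∈ (insert x S).powerset | IsDoor c i₀ S'} = 2 := by
  obtain ⟨x', hx', hcol⟩ := hS.exists_mem_color_eq hcx
  have hne : S ≠ (insert x S).erase x' := fun h => notMem_erase x' (insert x S) (h ▸ hx')
  rw [card_eq_two]
  refine ⟨S, (insert x S).erase x', hne, ?_⟩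
  ext S'
  rw [mem_filter, mem_powerset, mem_insert, mem_singleton]
  constructor
  · rintro ⟨hsub, hS'⟩
    refine or_iff_not_imp_left.2 fun hS'S => ?_
    obtain ⟨y, hy, hyc, rfl⟩ := hS.exists_eq_erase_insert hS' hx hsub hS'S
    rw [hS.injOn hy hx' (hyc.trans hcol.symm)]
  · rintro (rfl | rfl)
    · exact ⟨subset_insert x S', hS⟩
    · exact ⟨erase_subset x' _, hS.erase_insert hx hx' hcol⟩

theorem exists_isDoor_erase (hR : #R = Fintype.card I) (himg : R.image c = univ) (i₀ : I) :
    ∃ x ∈ R, IsDoor c i₀ (R.erase x) := by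
  obtain ⟨x, hx, rfl⟩ := mem_image.1 (himg.symm ▸ mem_univ i₀)
  have hinj : Set.InjOn c R := by rw [← card_image_iff, himg, hR, card_univ]
  refine ⟨x, hx, ?_, by rw [card_erase_add_one hx, hR]⟩
  ext i
  obtain ⟨z, hz, rfl⟩ := mem_image.1 (himg.symm ▸ mem_univ i)
  simp only [mem_image, mem_erase, mem_univ, and_true]
  constructor
  · rintro ⟨w, ⟨hwx, hw⟩, hwz⟩ hzx
    exact hwx (hinj hw hx (hwz.trans hzx))
  · exact fun hzx => ⟨z, ⟨fun h => hzx (congrArg c h), hz⟩, rfl⟩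

end DecidableEq

theorem odd_card_isDoor_iff (hR : #R = Fintype.card I) (i₀ : I) :
    Odd #{S ∈ R.powerset | IsDoor c i₀ S} ↔ R.image c = univ := by
  classical
  by_cases hdoor : ∃ x ∈ R, IsDoor c i₀ (R.erase x)
  · obtain ⟨x, hx, hS⟩ := hdoor
    have hxS := notMem_erase x R
    have himg : R.image c = insert (c x) (univ.erase i₀) := by
      rw [← hS.1, ← image_insert, insert_erase hx]
    nth_rw 1 [himg, ← insert_erase hx]
    by_cases hcx : c x = i₀
    · rw [hS.filter_powerset_insert_of_eq hxS hcx, card_singleton, hcx,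
        insert_erase (mem_univ i₀)]
      exact iff_of_true odd_one rfl
    · rw [hS.card_filter_powerset_insert_of_ne hxS hcx,
        insert_eq_of_mem (mem_erase.2 ⟨hcx, mem_univ _⟩)]
      exact iff_of_false (by decide)
        fun h => erase_eq_self.1 h (mem_univ i₀)
  · rw [filter_false_of_mem, card_empty]
    · exact iff_of_false (by decide)
        fun himg => hdoor (exists_isDoor_erase hR himg i₀)
    · intro S hSR hS
      obtain ⟨x, hx, rfl⟩ := exists_eq_insert_iff.2 ⟨mem_powerset.1 hSR, hS.2.trans hR.symm⟩
      exact hdoor ⟨x, mem_insert_self x S, by rwa [erase_insert hx]⟩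

-- Count the pairs of a room of `𝓕` and a door contained in it, in both orders.
theorem even_card_filter_image_eq_univ [DecidableEq X] [Nonempty I] {𝓕 : Finset (Finset X)}
    (hcard : ∀ R ∈ 𝓕, #R = Fintype.card I)
    (heven : ∀ S : Finset X, #S + 1 = Fintype.card I → Even #{R ∈ 𝓕 | S ⊆ R}) (c : X → I) :
    Even #{R ∈ 𝓕 | R.image c = univ} := by
  let i₀ : I := Classical.arbitrary I
  have hrooms : {R ∈ 𝓕 | R.image c = univ} =
      {R ∈ 𝓕 | Odd #{S ∈ R.powerset | IsDoor c i₀ S}} :=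
    filter_congr fun R hR => (odd_card_isDoor_iff (hcard R hR) i₀).symm
  let doors : Finset (Finset X) := {S ∈ 𝓕.biUnion powerset | IsDoor c i₀ S}
  have hdoors : ∀ R ∈ 𝓕, {S ∈ R.powerset | IsDoor c i₀ S} =
      doors.bipartiteAbove (fun R S => S ⊆ R) R := by
    intro R hR
    ext S
    simp only [doors, bipartiteAbove, mem_filter, mem_biUnion, mem_powerset]
    exact ⟨fun h => ⟨⟨⟨R, hR, h.1⟩, h.2⟩, h.1⟩, fun h => ⟨h.2, h.1.2⟩⟩
  rw [hrooms, ← even_sum_iff_even_card_odd, sum_congr rfl fun R hR => congrArg card (hdoors R hR),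
    sum_card_bipartiteAbove_eq_sum_card_bipartiteBelow]
  exact even_sum _ fun S hS => heven S (mem_filter.1 hS).2.2

end Sperner

section Dominance

open Finset

variable {X I α : Type*} [LinearOrder α] {r : I → X → α} {R S : Finset X} {i j : I} {x z : X}

/-- Scarf's dominance of a finite set with respect to the rankings `r i`: no point lies strictly
above the minimum of the set in every ranking. -/
def IsDominant (r : I → X → α) (R : Finset X) : Prop :=
  ∀ y, ∃ i, ∀ z ∈ R, r i y ≤ r i z

/-- The index `i` is redundant for `S` if each point of `S` is the minimum of `S` in some ranking
other than the `i`-th. The redundant indices of a dominant set with one point too few are those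
along which it can be completed. -/
def IsRedundant (r : I → X → α) (S : Finset X) (i : I) : Prop :=
  ∀ z ∈ S, ∃ k ≠ i, ∀ w ∈ S, r k z ≤ r k w

/-- The points that can join `S` without becoming its minimum in any ranking but the `i`-th. -/
def entrants (r : I → X → α) (S : Finset X) (i : I) : Set X :=
  {y | ∀ k ≠ i, ∃ z ∈ S, r k z < r k y}

theorem IsDominant.mono (hR : IsDominant r R) (hSR : S ⊆ R) : IsDominant r S := fun y =>
  (hR y).imp fun _ hi z hz => hi z (hSR hz)

theorem IsDominant.le_of_mem_entrants (hS : IsDominant r S) (hx : x ∈ entrants r S i)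
    (hz : z ∈ S) : r i x ≤ r i z := by
  obtain ⟨l, hl⟩ := hS x
  obtain rfl | hli := eq_or_ne l i
  · exact hl z hz
  · obtain ⟨w, hw, hlt⟩ := hx l hli
    exact absurd (hl w hw) hlt.not_ge

theorem IsDominant.eq_of_mem_entrants (hS : IsDominant r S) (hi : x ∈ entrants r S i)
    (hj : x ∈ entrants r S j) : i = j := by
  by_contra hij
  obtain ⟨z, hz, hlt⟩ := hj i hij
  exact (hS.le_of_mem_entrants hi hz).not_gt hlt

theorem IsRedundant.notMem_of_mem_entrants (hi : IsRedundant r S i) (hx : x ∈ entrants r S i) :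
    x ∉ S := by
  intro hxS
  obtain ⟨k, hk, hmin⟩ := hi x hxS
  obtain ⟨z, hz, hlt⟩ := hx k hk
  exact (hmin z hz).not_gt hlt

protected theorem IsDominant.insert [DecidableEq X] (hS : IsDominant r S) (hx : x ∈ entrants r S i)
    (hmax : ∀ y ∈ entrants r S i, r i y ≤ r i x) : IsDominant r (insert x S) := by
  intro y
  by_cases hy : y ∈ entrants r S i
  · exact ⟨i, forall_mem_insert _ _ _ |>.2 ⟨hmax y hy, fun z hz => hS.le_of_mem_entrants hy hz⟩⟩
  · simp only [entrants, Set.mem_ofPred_eq, not_forall, not_exists, not_and, not_lt] at hy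
    obtain ⟨k, hk, hle⟩ := hy
    obtain ⟨z, hz, hlt⟩ := hx k hk
    exact ⟨k, forall_mem_insert _ _ _ |>.2 ⟨(hle z hz).trans hlt.le, hle⟩⟩

theorem injOn_of_forall_le (hr : ∀ i, Function.Injective (r i)) {g : X → I}
    (hg : ∀ y, ∀ z ∈ R, r (g y) y ≤ r (g y) z) : Set.InjOn g R := fun z hz w hw h =>
  hr (g z) (le_antisymm (hg z w hw) (h ▸ hg w z hz))

theorem IsDominant.exists_isRedundant_of_insert [DecidableEq X] [Fintype I]
    (hr : ∀ i, Function.Injective (r i)) (hcard : #S + 1 = Fintype.card I) (hx : x ∉ S)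
    (hR : IsDominant r (insert x S)) :
    ∃ i, IsRedundant r S i ∧ x ∈ entrants r S i ∧ ∀ y ∈ entrants r S i, r i y ≤ r i x := by
  choose g hg using id hR
  have hinj := injOn_of_forall_le hr hg
  have hsurj : Set.SurjOn g (insert x S : Finset X) (univ : Finset I) :=
    surjOn_of_injOn_of_card_le g (fun _ _ => mem_univ _) hinj
      (by rw [card_univ, card_insert_of_notMem hx, hcard])
  have hgne : ∀ z ∈ S, g z ≠ g x := fun z hz h =>
    hx (hinj (mem_insert_of_mem hz) (mem_insert_self x S) h ▸ hz)
  have hxent : x ∈ entrants r S (g x) := by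
    intro k hk
    obtain ⟨z, hz, rfl⟩ := hsurj (mem_univ k)
    have hzx : z ≠ x := fun h => hk (congrArg g h)
    exact ⟨z, mem_of_mem_insert_of_ne hz hzx,
      (hg z x (mem_insert_self x S)).lt_of_ne ((hr (g z)).ne hzx)⟩
  refine ⟨g x, fun z hz => ⟨g z, hgne z hz, fun w hw => hg z w (mem_insert_of_mem hw)⟩, hxent,
    fun y hy => ?_⟩
  obtain ⟨l, hl⟩ := hR y
  have hlx : l = g x := by
    by_contra hne
    obtain ⟨z, hz, hlt⟩ := hy l hne
    exact (hl z (mem_insert_of_mem hz)).not_gt hlt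
  exact hlx ▸ hl x (mem_insert_self x S)

open scoped Classical in
theorem IsDominant.card_isRedundant [Fintype I] (hr : ∀ i, Function.Injective (r i))
    (hcard : #S + 1 = Fintype.card I) (hne : S.Nonempty) (hS : IsDominant r S) :
    #{i | IsRedundant r S i} = 2 := by
  choose g hg using hS
  have hinj := injOn_of_forall_le hr hg
  have hcompl : #(S.image g)ᶜ = 1 := by
    rw [card_compl, card_image_of_injOn hinj, ← hcard, Nat.add_sub_cancel_left]
  obtain ⟨j, hj⟩ := card_eq_one.1 hcompl
  have hjg : ∀ k, k ≠ j ↔ ∃ z ∈ S, g z = k := fun k => by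
    rw [← mem_image, ← not_iff_not, not_not, ← mem_compl, hj, mem_singleton]
  obtain ⟨z₀, hz₀, hmin⟩ := exists_min_image S (r j) hne
  have hgz₀ : ∀ z ∈ S, g z ≠ j := fun z hz => (hjg _).2 ⟨z, hz, rfl⟩
  rw [card_eq_two]
  refine ⟨j, g z₀, (hgz₀ z₀ hz₀).symm, ?_⟩
  ext k
  simp only [mem_filter, mem_univ, true_and, mem_insert, mem_singleton]
  constructor
  · intro hk
    refine or_iff_not_imp_left.2 fun hkj => ?_
    obtain ⟨z, hz, rfl⟩ := (hjg k).1 hkj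
    obtain ⟨l, hl, hlmin⟩ := hk z hz
    obtain rfl | hlj := eq_or_ne l j
    · exact congrArg g (hr l (le_antisymm (hlmin z₀ hz₀) (hmin z hz)))
    · obtain ⟨w, hw, rfl⟩ := (hjg l).1 hlj
      exact absurd (congrArg g (hr _ (le_antisymm (hg w z hz) (hlmin w hw)))) hl
  · rintro (rfl | rfl)
    · exact fun z hz => ⟨g z, hgz₀ z hz, hg z⟩
    · intro z hz
      obtain rfl | hzz₀ := eq_or_ne z z₀
      · exact ⟨j, (hgz₀ z hz).symm, hmin⟩
      · exact ⟨g z, hinj.ne hz hz₀ hzz₀, hg z⟩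

open scoped Classical in
theorem IsDominant.card_insert_isDominant [Fintype X] [DecidableEq X] [Fintype I]
    (hr : ∀ i, Function.Injective (r i)) (hcard : #S + 1 = Fintype.card I) (hne : S.Nonempty)
    (hS : IsDominant r S) (hent : ∀ i, (entrants r S i).Nonempty) :
    #{x | x ∉ S ∧ IsDominant r (insert x S)} = 2 := by
  choose p hp hmax using fun i => Set.exists_max_image _ (r i) (Set.toFinite _) (hent i)
  have himg : ({x | x ∉ S ∧ IsDominant r (insert x S)} : Finset X) =
      ({i | IsRedundant r S i} : Finset I).image p := by
    ext x
    simp only [mem_filter, mem_univ, true_and, mem_image]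
    constructor
    · rintro ⟨hx, hR⟩
      obtain ⟨i, hi, hxi, hxmax⟩ := hR.exists_isRedundant_of_insert hr hcard hx
      exact ⟨i, hi, hr i (le_antisymm (hxmax _ (hp i)) (hmax i x hxi))⟩
    · rintro ⟨i, hi, rfl⟩
      exact ⟨hi.notMem_of_mem_entrants (hp i), hS.insert (hp i) (hmax i)⟩
  have hinj : Function.Injective p := fun i j hij => hS.eq_of_mem_entrants (hp i) (hij ▸ hp j)
  rw [himg, card_image_of_injective _ hinj, hS.card_isRedundant hr hcard hne]

end Dominance

section Scarf

open Finset

theorem card_filter_subset_eq_card_insert_mem {X : Type*} [Fintype X] [DecidableEq X]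
    {𝓕 : Finset (Finset X)} {S : Finset X} (h𝓕 : ∀ R ∈ 𝓕, #R = #S + 1) :
    #{R ∈ 𝓕 | S ⊆ R} = #{x | x ∉ S ∧ insert x S ∈ 𝓕} := by
  have hinj : Set.InjOn (fun x => insert x S) ({x | x ∉ S ∧ insert x S ∈ 𝓕} : Finset X) :=
    (insert_inj_on S).mono fun x hx => (mem_filter.1 hx).2.1
  rw [← card_image_of_injOn hinj]
  congr 1
  ext R
  simp only [mem_filter, mem_image, mem_univ, true_and]
  constructor
  · rintro ⟨hR, hSR⟩
    obtain ⟨x, hx, rfl⟩ := exists_eq_insert_iff.2 ⟨hSR, (h𝓕 R hR).symm⟩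
    exact ⟨x, ⟨hx, hR⟩, rfl⟩
  · rintro ⟨x, ⟨-, hx⟩, rfl⟩
    exact ⟨hx, subset_insert x S⟩

variable {T I α : Type*}

/-- The set of all slack points: the one room that closes up the boundary of the complex of
dominant sets in Scarf's argument. -/
def slacks (T I : Type*) [Fintype I] : Finset (T ⊕ I) :=
  univ.map Function.Embedding.inr

section Slacks

variable [Fintype I] {i : I} {t : T}

theorem inr_mem_slacks : .inr i ∈ slacks T I := mem_map_of_mem _ (mem_univ i)

theorem inl_notMem_slacks : .inl t ∉ slacks T I := by
  simp only [slacks, mem_map, Function.Embedding.inr_apply, reduceCtorEq, and_false, exists_false,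
    not_false_eq_true]

theorem card_slacks : #(slacks T I) = Fintype.card I := card_map _

end Slacks

/-- The ranking `u i` of `T` extended to one slack point for each index: the slack point of `i` is
ranked below all of `T`, and those of the other indices above it. -/
def slackRank [DecidableEq I] (u : I → T → α) (i : I) : T ⊕ I → WithBot (α ⊕ₗ I) :=
  Sum.elim (fun t => (toLex (Sum.inl (u i t)) : α ⊕ₗ I))
    fun j => if j = i then ⊥ else (toLex (Sum.inr j) : α ⊕ₗ I)

variable [LinearOrder α] [LinearOrder I] {u : I → T → α} {i j m : I} {s t : T}

theorem slackRank_inl_le_inl_iff :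
    slackRank u i (.inl s) ≤ slackRank u i (.inl t) ↔ u i s ≤ u i t := by
  simp only [slackRank, Sum.elim_inl, WithBot.coe_le_coe, Sum.Lex.inl_le_inl_iff]

theorem slackRank_inr_self_lt_inl : slackRank u i (.inr i) < slackRank u i (.inl t) := by
  simp only [slackRank, Sum.elim_inl, Sum.elim_inr, if_true, WithBot.bot_lt_coe]

theorem slackRank_inr_self_le (x : T ⊕ I) : slackRank u i (.inr i) ≤ slackRank u i x := by
  simp only [slackRank, Sum.elim_inr, if_true, bot_le]

theorem slackRank_inl_lt_inr (hj : j ≠ i) :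
    slackRank u i (.inl t) < slackRank u i (.inr j) := by
  simp only [slackRank, Sum.elim_inl, Sum.elim_inr, if_neg hj, WithBot.coe_lt_coe,
    Sum.Lex.inl_lt_inr]

theorem slackRank_injective (hu : Function.Injective (u i)) :
    Function.Injective (slackRank u i) := by
  rintro (s | j) (t | k) h
  · rw [hu (le_antisymm (slackRank_inl_le_inl_iff.1 h.le) (slackRank_inl_le_inl_iff.1 h.ge))]
  · obtain rfl | hk := eq_or_ne k i
    · exact absurd h.symm slackRank_inr_self_lt_inl.ne
    · exact absurd h (slackRank_inl_lt_inr hk).ne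
  · obtain rfl | hj := eq_or_ne j i
    · exact absurd h slackRank_inr_self_lt_inl.ne
    · exact absurd h.symm (slackRank_inl_lt_inr hj).ne
  · simp only [slackRank, Sum.elim_inr] at h
    split_ifs at h with hj hk hk
    · rw [hj, hk]
    · cases h
    · cases h
    · simpa only [WithBot.coe_inj, toLex_inj, Sum.inr.injEq] using h

variable [Fintype I]

theorem isDominant_insert_inl_erase_slacks_iff [DecidableEq T] :
    IsDominant (slackRank u) (insert (.inl t) ((slacks T I).erase (.inr m))) ↔
      ∀ s, u m s ≤ u m t := by
  have hforall : ∀ {p : T ⊕ I → Prop}, (∀ z ∈ insert (.inl t) ((slacks T I).erase (.inr m)), p z) ↔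
      p (.inl t) ∧ ∀ j ≠ m, p (.inr j) := by
    intro p
    simp [slacks, Sum.forall]
  simp only [IsDominant, hforall]
  constructor
  · intro h s
    obtain ⟨i, hit, hi⟩ := h (.inl s)
    obtain rfl : i = m := by
      by_contra him
      exact (hi i him).not_gt slackRank_inr_self_lt_inl
    exact slackRank_inl_le_inl_iff.1 hit
  · rintro h (s | i)
    · exact ⟨m, slackRank_inl_le_inl_iff.2 (h s), fun j hj => (slackRank_inl_lt_inr hj).le⟩
    · exact ⟨i, slackRank_inr_self_le _, fun j _ => slackRank_inr_self_le _⟩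

section Rooms

variable [Fintype T] [DecidableEq T]

open scoped Classical in
/-- The closed complex of Scarf's argument: its facets are the dominant sets of maximal size for
the rankings extended by slack points, together with the set of all slack points. -/
noncomputable def scarfRooms (u : I → T → α) : Finset (Finset (T ⊕ I)) :=
  {R | #R = Fintype.card I ∧ (R = slacks T I ∨ IsDominant (slackRank u) R)}

theorem mem_scarfRooms {R : Finset (T ⊕ I)} : R ∈ scarfRooms u ↔
    #R = Fintype.card I ∧ (R = slacks T I ∨ IsDominant (slackRank u) R) := by
  simp only [scarfRooms, mem_filter, mem_univ, true_and]

theorem card_insert_erase_slacks_mem_scarfRooms [Nonempty T] (hu : Function.Injective (u m)) :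
    #{x | x ∉ (slacks T I).erase (.inr m) ∧
      insert x ((slacks T I).erase (.inr m)) ∈ scarfRooms u} = 2 := by
  obtain ⟨t, ht⟩ := Finite.exists_max (u m)
  have hins : insert (.inr m) ((slacks T I).erase (.inr m)) = slacks T I :=
    insert_erase inr_mem_slacks
  rw [card_eq_two]
  refine ⟨.inr m, .inl t, Sum.inr_ne_inl, ?_⟩
  ext (s | j)
  · have hs : (.inl s : T ⊕ I) ∉ (slacks T I).erase (.inr m) := fun h =>
      inl_notMem_slacks (mem_of_mem_erase h)
    have hcard : #(insert (.inl s) ((slacks T I).erase (.inr m))) = Fintype.card I := by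
      rw [card_insert_of_notMem hs, card_erase_add_one inr_mem_slacks, card_slacks]
    have hne : insert (.inl s) ((slacks T I).erase (.inr m)) ≠ slacks T I := fun h =>
      inl_notMem_slacks (h ▸ mem_insert_self _ _)
    simp only [mem_filter, mem_univ, true_and, mem_scarfRooms, hs, hcard, hne, not_false_eq_true,
      false_or, isDominant_insert_inl_erase_slacks_iff, mem_insert, mem_singleton, reduceCtorEq,
      Sum.inl.injEq]
    exact ⟨fun h => hu (le_antisymm (ht s) (h t)), fun h => h ▸ ht⟩
  · simp only [mem_filter, mem_univ, true_and, mem_erase, ne_eq, Sum.inr.injEq, inr_mem_slacks,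
      and_true, not_not, mem_insert, mem_singleton, reduceCtorEq, or_false, and_iff_left_iff_imp]
    rintro rfl
    exact mem_scarfRooms.2 ⟨by rw [hins, card_slacks], .inl hins⟩

theorem even_card_insert_mem_scarfRooms (hu : ∀ i, Function.Injective (u i))
    {S : Finset (T ⊕ I)} (hcard : #S + 1 = Fintype.card I) (ht : .inl t ∈ S) :
    Even #{x | x ∉ S ∧ insert x S ∈ scarfRooms u} := by
  classical
  have hrooms : ∀ x, x ∉ S ∧ insert x S ∈ scarfRooms u ↔
      x ∉ S ∧ IsDominant (slackRank u) (insert x S) := by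
    refine fun x => and_congr_right fun hx => ?_
    have hne : insert x S ≠ slacks T I := fun h =>
      inl_notMem_slacks (h ▸ mem_insert_of_mem ht)
    simp only [mem_scarfRooms, card_insert_of_notMem hx, hcard, hne, true_and, false_or]
  rw [filter_congr fun x _ => hrooms x]
  by_cases hS : IsDominant (slackRank u) S
  · rw [hS.card_insert_isDominant (fun i => slackRank_injective (hu i)) hcard ⟨_, ht⟩
      fun i => ⟨.inr i, fun k hk => ⟨_, ht, slackRank_inl_lt_inr hk.symm⟩⟩]
    exact even_two
  · rw [filter_false_of_mem fun x _ hx => hS (hx.2.mono (subset_insert x S)), card_empty]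
    exact Even.zero

theorem even_card_scarfRooms_superset [Nonempty T] (hu : ∀ i, Function.Injective (u i))
    {S : Finset (T ⊕ I)} (hcard : #S + 1 = Fintype.card I) :
    Even #{R ∈ scarfRooms u | S ⊆ R} := by
  rw [card_filter_subset_eq_card_insert_mem fun R hR => (mem_scarfRooms.1 hR).1.trans hcard.symm]
  by_cases hS : ∃ t, .inl t ∈ S
  · obtain ⟨t, ht⟩ := hS
    exact even_card_insert_mem_scarfRooms hu hcard ht
  · have hsub : S ⊆ slacks T I := by
      rintro (t | i) hx
      · exact absurd ⟨t, hx⟩ hS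
      · exact inr_mem_slacks
    obtain ⟨m | m, hm, hins⟩ := exists_eq_insert_iff.2 ⟨hsub, hcard.trans card_slacks.symm⟩
    · exact absurd (hins ▸ mem_insert_self _ S) inl_notMem_slacks
    · rw [show S = (slacks T I).erase (.inr m) by rw [← hins, erase_insert hm],
        card_insert_erase_slacks_mem_scarfRooms (hu m)]
      exact even_two

end Rooms

theorem exists_isDominant_image_eq_univ [Finite T] [Nonempty T] (hu : ∀ i, Function.Injective (u i))
    (c : T → I) :
    ∃ R : Finset (T ⊕ I), IsDominant (slackRank u) R ∧ R.image (Sum.elim c id) = univ := by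
  classical
  have := Fintype.ofFinite T
  have : Nonempty I := Nonempty.map c inferInstance
  have heven : Even #{R ∈ scarfRooms u | R.image (Sum.elim c id) = univ} :=
    even_card_filter_image_eq_univ (fun R hR => (mem_scarfRooms.1 hR).1)
      (fun S hS => even_card_scarfRooms_superset hu hS) _
  have hslacks : slacks T I ∈ {R ∈ scarfRooms u | R.image (Sum.elim c id) = univ} :=
    mem_filter.2 ⟨mem_scarfRooms.2 ⟨card_slacks, .inl rfl⟩, eq_univ_of_forall fun i =>
      mem_image.2 ⟨.inr i, inr_mem_slacks, rfl⟩⟩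
  obtain ⟨R, hR, hne⟩ := exists_mem_ne
    (Nat.one_lt_of_ne_zero_of_even (card_ne_zero_of_mem hslacks) heven) (slacks T I)
  obtain ⟨hroom, himg⟩ := mem_filter.1 hR
  exact ⟨R, (mem_scarfRooms.1 hroom).2.resolve_left hne, himg⟩

end Scarf

section Cover

open Finset

theorem exists_finset_forall_exists_forall_le {T I α : Type*} [Finite T] [Finite I] [LinearOrder α]
    (u : I → T → α) (c : T → I) :
    ∃ σ : Finset T, ∀ y, ∃ s ∈ σ, ∀ t ∈ σ, u (c s) y ≤ u (c s) t := by
  cases isEmpty_or_nonempty T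
  · exact ⟨∅, isEmptyElim⟩
  have := Fintype.ofFinite I
  obtain ⟨_, -⟩ := exists_wellFoundedLT T
  obtain ⟨_, -⟩ := exists_wellFoundedLT I
  let v : I → T → α ×ₗ T := fun i t => toLex (u i t, t)
  have hv : ∀ i, Function.Injective (v i) := fun i s t h => congrArg (fun p => (ofLex p).2) h
  obtain ⟨R, hdom, himg⟩ := exists_isDominant_image_eq_univ hv c
  refine ⟨R.toLeft, fun y => ?_⟩
  obtain ⟨i, hi⟩ := hdom (.inl y)
  obtain ⟨s | j, hs, rfl⟩ := mem_image.1 (himg.symm ▸ mem_univ i)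
  · refine ⟨s, mem_toLeft.2 hs, fun t ht => ?_⟩
    have hle : v (c s) y ≤ v (c s) t := slackRank_inl_le_inl_iff.1 (hi _ (mem_toLeft.1 ht))
    exact Prod.Lex.monotone_fst _ _ hle
  · exact absurd slackRank_inr_self_lt_inl (hi _ hs).not_gt

theorem exists_lowerBound_eq_of_mem_eq_zero_of_notMem {T I : Type*} {p : T → I → ℝ} {σ : Finset T}
    (hσ : σ.Nonempty) (hp : ∀ t ∈ σ, 0 ≤ p t) (J : Set I) :
    ∃ m : I → ℝ, 0 ≤ m ∧ (∀ t ∈ σ, m ≤ p t) ∧ (∀ i ∈ J, ∃ t ∈ σ, m i = p t i) ∧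
      ∀ i ∉ J, m i = 0 := by
  refine ⟨J.indicator fun i => σ.inf' hσ fun t => p t i, ?_, fun t ht => ?_, fun i hi => ?_,
    fun i hi => Set.indicator_of_notMem hi _⟩
  · exact Set.indicator_nonneg fun i _ => le_inf' hσ _ fun t ht => hp t ht i
  · exact Set.indicator_le' (fun i _ => inf'_le _ ht) fun i _ => hp t ht i
  · rw [Set.indicator_of_mem hi]
    exact exists_mem_eq_inf' hσ fun t => p t i

section Fintype

variable {I : Type*} [Fintype I]

section LowerBound

variable {m s t : I → ℝ} {δ : ℝ}

theorem le_add_card_mul_of_mem_stdSimplex (hm : 0 ≤ m)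
    (hmδ : ∀ y ∈ stdSimplex ℝ I, ∃ i, y i ≤ m i + δ) (ht : t ∈ stdSimplex ℝ I) (hmt : m ≤ t)
    (i : I) : t i ≤ m i + Fintype.card I * δ := by
  have hI : (0 : ℝ) < Fintype.card I := Nat.cast_pos.2 (Fintype.card_pos_iff.2 ⟨i⟩)
  have hsum : ∑ j, m j ≤ 1 := ht.2 ▸ sum_le_sum fun j _ => hmt j
  let y : I → ℝ := fun j => m j + (1 - ∑ k, m k) / Fintype.card I
  have hy : y ∈ stdSimplex ℝ I := by
    refine ⟨fun j => add_nonneg (hm j) (div_nonneg (sub_nonneg.2 hsum) hI.le), ?_⟩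
    rw [sum_add_distrib, sum_const, card_univ, nsmul_eq_mul, mul_div_cancel₀ _ hI.ne']
    ring
  obtain ⟨j, hj⟩ := hmδ y hy
  have hslack : 1 - ∑ k, m k ≤ Fintype.card I * δ :=
    (div_le_iff₀' hI).1 (le_of_add_le_add_left hj)
  have hti : t i - m i ≤ ∑ k, (t k - m k) :=
    single_le_sum (f := fun k => t k - m k) (fun k _ => sub_nonneg.2 (hmt k)) (mem_univ i)
  rw [sum_sub_distrib, ht.2] at hti
  linarith

theorem dist_le_card_mul_of_mem_stdSimplex [Nonempty I] (hm : 0 ≤ m)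
    (hmδ : ∀ y ∈ stdSimplex ℝ I, ∃ i, y i ≤ m i + δ) (hs : s ∈ stdSimplex ℝ I) (hms : m ≤ s)
    (ht : t ∈ stdSimplex ℝ I) (hmt : m ≤ t) : dist s t ≤ Fintype.card I * δ := by
  have hsδ := le_add_card_mul_of_mem_stdSimplex hm hmδ hs hms
  have htδ := le_add_card_mul_of_mem_stdSimplex hm hmδ ht hmt
  refine dist_pi_le_iff'.2 fun i => abs_sub_le_iff.2 ⟨?_, ?_⟩
  · linarith [hsδ i, hmt i]
  · linarith [htδ i, hms i]

end LowerBound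

theorem exists_mem_stdSimplex_forall_le_or_mem_cthickening [Nonempty I] {C : I → Set (I → ℝ)}
    (hcover : stdSimplex ℝ I ⊆ ⋃ i, C i) {η : ℝ} (hη : 0 < η) :
    ∃ x ∈ stdSimplex ℝ I, ∀ i, x i ≤ η ∨ x ∈ Metric.cthickening η (C i) := by
  classical
  have hI : (0 : ℝ) < Fintype.card I := Nat.cast_pos.2 Fintype.card_pos
  obtain ⟨N, hN, hfin, hnet⟩ := (isCompact_stdSimplex ℝ I).finite_cover_balls (div_pos hη hI)
  have := hfin.to_subtype
  choose c hc using fun t : N => Set.mem_iUnion.1 (hcover (hN t.2))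
  obtain ⟨σ, hσ⟩ := exists_finset_forall_exists_forall_le (fun i (t : N) => t.1 i) c
  have hnear : ∀ y ∈ stdSimplex ℝ I, ∃ s ∈ σ, ∀ t ∈ σ,
      y (c s) ≤ t.1 (c s) + η / Fintype.card I := by
    intro y hy
    obtain ⟨z, hz, hyz⟩ := Set.mem_iUnion₂.1 (hnet hy)
    obtain ⟨s, hs, hle⟩ := hσ ⟨z, hz⟩
    have hcoord : y (c s) - z (c s) ≤ η / Fintype.card I :=
      (le_abs_self _).trans ((dist_le_pi_dist y z (c s)).trans (Metric.mem_ball.1 hyz).le)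
    exact ⟨s, hs, fun t ht => by linarith [hle t ht]⟩
  obtain ⟨x, hx, -⟩ := hnear _ (single_mem_stdSimplex ℝ (Classical.arbitrary I))
  obtain ⟨m, hm, hmσ, hmc, hm0⟩ := exists_lowerBound_eq_of_mem_eq_zero_of_notMem
    ⟨x, hx⟩ (fun t _ => (hN t.2).1) (c '' σ)
  have hmδ : ∀ y ∈ stdSimplex ℝ I, ∃ i, y i ≤ m i + η / Fintype.card I := by
    intro y hy
    obtain ⟨s, hs, hle⟩ := hnear y hy
    obtain ⟨t, ht, hmt⟩ := hmc (c s) (Set.mem_image_of_mem c hs)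
    exact ⟨c s, hmt ▸ hle t ht⟩
  have hη_eq : Fintype.card I * (η / Fintype.card I) = η := mul_div_cancel₀ _ hI.ne'
  refine ⟨x, hN x.2, fun i => ?_⟩
  by_cases hi : i ∈ c '' σ
  · obtain ⟨s, hs, rfl⟩ := hi
    refine .inr (Metric.mem_cthickening_of_dist_le _ s.1 _ _ (hc s) ?_)
    exact (dist_le_card_mul_of_mem_stdSimplex hm hmδ (hN x.2) (hmσ x hx) (hN s.2)
      (hmσ s hs)).trans_eq hη_eq
  · refine .inl ?_
    have hle := le_add_card_mul_of_mem_stdSimplex hm hmδ (hN x.2) (hmσ x hx) i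
    rwa [hm0 i hi, zero_add, hη_eq] at hle

theorem exists_mem_stdSimplex_forall_mem_of_ne_zero [Nonempty I] {C : I → Set (I → ℝ)}
    (hC : ∀ i, IsClosed (C i)) (hcover : stdSimplex ℝ I ⊆ ⋃ i, C i) :
    ∃ x ∈ stdSimplex ℝ I, ∀ i, x i ≠ 0 → x ∈ C i := by
  let K : Set.Ioi (0 : ℝ) → Set (I → ℝ) := fun η =>
    stdSimplex ℝ I ∩ ⋂ i, ({x | x i ≤ η} ∪ Metric.cthickening η (C i))
  have hclosed : ∀ η, IsClosed (K η) := fun η =>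
    (isClosed_stdSimplex ℝ I).inter <| isClosed_iInter fun i =>
      (isClosed_le (continuous_apply i) continuous_const).union Metric.isClosed_cthickening
  have hmono : Monotone K := fun η₁ η₂ h =>
    Set.inter_subset_inter_right _ <| Set.iInter_mono fun i =>
      Set.union_subset_union (fun x (hx : x i ≤ η₁) => hx.trans h) (Metric.cthickening_mono h _)
  have hne : ∀ η, (K η).Nonempty := fun η => by
    obtain ⟨x, hx, h⟩ := exists_mem_stdSimplex_forall_le_or_mem_cthickening hcover η.2
    exact ⟨x, hx, Set.mem_iInter.2 h⟩
  obtain ⟨x, hx⟩ := IsCompact.nonempty_iInter_of_directed_nonempty_isCompact_isClosed K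
    hmono.directed_ge hne
    (fun η => (isCompact_stdSimplex ℝ I).of_isClosed_subset (hclosed η) Set.inter_subset_left)
    hclosed
  rw [Set.mem_iInter] at hx
  have hxΔ : x ∈ stdSimplex ℝ I := (hx ⟨1, Set.mem_Ioi.2 one_pos⟩).1
  refine ⟨x, hxΔ, fun i hi => ?_⟩
  have hpos : 0 < x i := (hxΔ.1 i).lt_of_ne' hi
  rw [← (hC i).closure_eq, Metric.closure_eq_iInter_cthickening' _ (Set.Ioo 0 (x i))]
  · exact Set.mem_iInter₂.2 fun η hη =>
      (Set.mem_iInter.1 (hx ⟨η, hη.1⟩).2 i).resolve_left hη.2.not_ge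
  · exact fun ε hε => (exists_between (lt_min hpos hε)).imp fun η hη =>
      ⟨⟨hη.1, hη.2.trans_le (min_le_left _ _)⟩, hη.1, hη.2.le.trans (min_le_right _ _)⟩

theorem exists_mem_stdSimplex_eq_zero_of_lt [Nonempty I] {f : (I → ℝ) → I → ℝ}
    (hf : ContinuousOn f (stdSimplex ℝ I)) :
    ∃ x ∈ stdSimplex ℝ I, ∀ i j, f x i < f x j → x i = 0 := by
  have hfi : ∀ i, ContinuousOn (fun x => f x i) (stdSimplex ℝ I) := continuousOn_pi.1 hf
  let C : I → Set (I → ℝ) := fun i => ⋂ j, {x ∈ stdSimplex ℝ I | f x j ≤ f x i}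
  have hC : ∀ i, IsClosed (C i) := fun i => isClosed_iInter fun j =>
    (isClosed_stdSimplex ℝ I).isClosed_le (hfi j) (hfi i)
  have hcover : stdSimplex ℝ I ⊆ ⋃ i, C i := by
    intro x hx
    obtain ⟨i, hi⟩ := Finite.exists_max (f x)
    exact Set.mem_iUnion.2 ⟨i, Set.mem_iInter.2 fun j => ⟨hx, hi j⟩⟩
  obtain ⟨x, hx, hxC⟩ := exists_mem_stdSimplex_forall_mem_of_ne_zero hC hcover
  exact ⟨x, hx, fun i j hij => by_contra fun h => (Set.mem_iInter.1 (hxC i h) j).2.not_gt hij⟩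

end Fintype

end Cover

theorem stmt15_general {A : Type*} [Fintype A] [Nonempty A] {b : A → ℝ} (hb : ∑ a, b a ≤ 1)
    {f : (A → ℝ) → A → ℝ} (hf : ContinuousOn f {x | (∀ a, b a ≤ x a) ∧ ∑ a, x a = 1}) :
    ∃ x : A → ℝ, (∀ a, b a ≤ x a) ∧ ∑ a, x a = 1 ∧ ∀ a' a'', f x a' < f x a'' → x a' = b a' := by
  let p : (A → ℝ) → A → ℝ := fun x => b + (1 - ∑ a, b a) • x
  have hp : Set.MapsTo p (stdSimplex ℝ A) {x | (∀ a, b a ≤ x a) ∧ ∑ a, x a = 1} := by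
    refine fun x hx => ⟨fun a => le_add_of_nonneg_right ?_, ?_⟩
    · exact mul_nonneg (sub_nonneg.2 hb) (hx.1 a)
    · simp only [p, Pi.add_apply, Pi.smul_apply, smul_eq_mul, Finset.sum_add_distrib,
        ← Finset.mul_sum, hx.2, mul_one, add_sub_cancel]
  have hpcont : Continuous p := by fun_prop
  obtain ⟨x, hx, hzero⟩ :=
    exists_mem_stdSimplex_eq_zero_of_lt (hf.comp hpcont.continuousOn hp)
  obtain ⟨hbx, hsum⟩ := hp hx
  refine ⟨p x, hbx, hsum, fun a' a'' h => ?_⟩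
  simp only [p, Pi.add_apply, Pi.smul_apply, hzero a' a'' h, smul_zero, add_zero]

/-- Existence of an ε-perfect γ-point on the truncated simplex (fixed-point step). -/
theorem stmt15 {A : Type*} [Fintype A] (hcard : 2 ≤ Fintype.card A)
    (γ ε : ℝ) (hγ : 0 < γ) (hε0 : 0 < ε) (hε : ε ≤ 1 / 2)
    (f : (A → ℝ) → A → ℝ)
    (hf : ContinuousOn f {x : A → ℝ | ((∀ a, 0 ≤ x a) ∧ ∑ a, x a = 1) ∧
        ∀ a, ε ^ 2 / Fintype.card A ≤ x a}) :
    ∃ x : A → ℝ, ((∀ a, 0 ≤ x a) ∧ ∑ a, x a = 1) ∧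
      (∀ a, ε ^ 2 / Fintype.card A ≤ x a) ∧
      ∀ a' a'', γ < f x a'' - f x a' → x a' ≤ ε := by
  have : Nonempty A := Fintype.card_pos_iff.1 (by positivity)
  have hn : (1 : ℝ) ≤ Fintype.card A := Nat.one_le_cast.2 Fintype.card_pos
  set δ : ℝ := ε ^ 2 / Fintype.card A
  have hδ0 : 0 ≤ δ := by positivity
  have hδε : δ ≤ ε := (div_le_self (sq_nonneg ε) hn).trans (by nlinarith)
  have hδ1 : ∑ _a : A, δ ≤ 1 := by
    rw [Finset.sum_const, Finset.card_univ, nsmul_eq_mul, mul_div_cancel₀ _ (by positivity)]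
    nlinarith
  obtain ⟨x, hδx, hsum, hx⟩ := stmt15_general hδ1
    (hf.mono fun x hx => ⟨⟨fun a => hδ0.trans (hx.1 a), hx.2⟩, hx.1⟩)
  exact ⟨x, ⟨fun a => hδ0.trans (hδx a), hsum⟩, hδx, fun a' a'' h =>
    (hx a' a'' (by linarith)).trans_le hδε⟩
end

section
/- Let A be a nonempty finite set, γ ≥ 0, and u: Δ(A) → ℝ^A a continuous map. Then there exists β ∈ Δ(A) such that β(a) = exp(γ·u_a(β)) / ∑_{ã∈A} exp(γ·u_{ã}(β)) for all a ∈ A; moreover any such β is totally mixed. -/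
/-!
Brouwer's theorem is proved by the Milnor–Rogers volume argument. If `r` is a Lipschitz retraction
of a ball onto its sphere and `g = r - id`, then for small `t` the map `id + t g` is a bijection of
the ball, so the integral of `det (1 + t g')` is the volume of the ball. This integral is a
polynomial in `t`, hence it is the volume at `t = 1` too, whereas `det r' = 0` because `r` takes
values in the sphere. Smoothing and a cutoff then give a fixed point for every bounded continuous
self-map of a finite-dimensional space. Extending `u` from the simplex to `ℝ ^ A` by Tietze's
theorem turns the softmax response into such a map, and its values are in the simplex.
-/

open Function MeasureTheory Metric Module Polynomial Set Topology
open scoped NNReal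

section Determinant

theorem exists_weights_eval_eq_sum {F : Type*} [Field F] (s : Finset F) (x : F) :
    ∃ w : F → F, ∀ p : F[X], p.degree < s.card → p.eval x = ∑ t ∈ s, w t * p.eval t := by
  classical
  refine ⟨fun t ↦ (Lagrange.basis s id t).eval x, fun p hp ↦ ?_⟩
  conv_lhs => rw [Lagrange.eq_interpolate (injOn_id _) hp]
  simp [Lagrange.interpolate_apply, eval_finsetSum, mul_comm]

theorem exists_polynomial_eval_eq_det_add_smul {R M : Type*} [CommRing R] [Nontrivial R]
    [AddCommGroup M] [Module R M] [Module.Free R M] [Module.Finite R M] (A B : M →ₗ[R] M) :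
    ∃ p : R[X], p.natDegree ≤ finrank R M ∧ ∀ t, p.eval t = LinearMap.det (B + t • A) := by
  classical
  let b := Module.finBasis R M
  let a := LinearMap.toMatrix b b A
  let c := LinearMap.toMatrix b b B
  refine ⟨((X : R[X]) • a.map C + c.map C).det, ?_, fun t ↦ ?_⟩
  · simpa only [Fintype.card_fin] using natDegree_det_X_add_C_le a c
  · rw [← LinearMap.det_toMatrix b, ← coe_evalRingHom, RingHom.map_det]
    congr 1
    ext i j
    simpa [a, c, add_comm, LinearMap.toMatrix_apply] using mul_comm _ _

theorem det_one_add_pos_of_norm_lt_one {E : Type*} [NormedAddCommGroup E] [NormedSpace ℝ E]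
    [CompleteSpace E] {A : E →L[ℝ] E} (hA : ‖A‖ < 1) : 0 < (1 + A).det := by
  have hne : ∀ t ∈ Icc (0 : ℝ) 1, (1 + t • A).det ≠ 0 := by
    intro t ht
    have hlt : ‖-(t • A)‖ < 1 := by
      rw [norm_neg, norm_smul, Real.norm_of_nonneg ht.1]
      exact (mul_le_of_le_one_left (norm_nonneg A) ht.2).trans_lt hA
    have hunit : IsUnit (1 + t • A) := by
      simpa only [sub_neg_eq_add] using isUnit_one_sub_of_norm_lt_one hlt
    exact ((hunit.map (ContinuousLinearMap.toLinearMapRingHom : (E →L[ℝ] E) →+* E →ₗ[ℝ] E)).map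
      LinearMap.det).ne_zero
  have hcont : Continuous fun t : ℝ ↦ (1 + t • A).det :=
    ContinuousLinearMap.continuous_det.comp (by fun_prop)
  by_contra! hle
  have hone : (1 : E →L[ℝ] E).det = 1 := LinearMap.det_id
  obtain ⟨t, ht, ht0⟩ := intermediate_value_Icc' zero_le_one hcont.continuousOn
    (show (0 : ℝ) ∈ Icc _ _ by simpa [hone] using hle)
  exact hne t ht ht0

theorem det_fderiv_eq_zero_of_eventually_mem_sphere {E : Type*} [NormedAddCommGroup E]
    [InnerProductSpace ℝ E] [FiniteDimensional ℝ E] {r : E → E} {c x : E} {R : ℝ}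
    (hr : DifferentiableAt ℝ r x) (hR : R ≠ 0) (hrR : ∀ᶠ y in 𝓝 x, r y ∈ sphere c R) :
    (fderiv ℝ r x).det = 0 := by
  have hconst : (fun y ↦ ‖r y - c‖ ^ 2) =ᶠ[𝓝 x] fun _ ↦ R ^ 2 := by
    filter_upwards [hrR] with y hy
    rw [mem_sphere_iff_norm.1 hy]
  have horth : ∀ v, inner ℝ (r x - c) (fderiv ℝ r x v) = 0 := by
    intro v
    have h := (hr.hasFDerivAt.sub_const c).norm_sq.unique
      ((hasFDerivAt_const (R ^ 2) x).congr_of_eventuallyEq hconst)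
    simpa [inner_sub_left] using congr($h v)
  by_contra hdet
  obtain ⟨v, hv⟩ := ((Module.End.isUnit_iff _).1
    ((LinearMap.isUnit_iff_isUnit_det _).2 (isUnit_iff_ne_zero.2 hdet))).2 (r x - c)
  have h0 : r x - c = 0 := by
    rw [← inner_self_eq_zero (𝕜 := ℝ)]
    nth_rw 2 [← hv]
    exact horth v
  have := mem_sphere_iff_norm.1 hrR.self_of_nhds
  rw [h0, norm_zero] at this
  exact hR this.symm

end Determinant

section Lipschitz

theorem lipschitzWith_indicator_of_eqOn_frontier {E F : Type*} [SeminormedAddCommGroup E]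
    [NormedSpace ℝ E] [PseudoMetricSpace F] [Zero F] {s : Set E} {g : E → F} {K : ℝ≥0}
    (hg : LipschitzOnWith K g (closure s)) (h0 : EqOn g 0 (frontier s)) :
    LipschitzWith K (s.indicator g) := by
  have hcross : ∀ x ∈ s, ∀ y ∉ s, dist (g x) 0 ≤ K * dist x y := by
    intro x hx y hy
    obtain ⟨z, hz, hzs⟩ := isPreconnected_closed_iff.1 (convex_segment x y).isPreconnected
      (closure s) (closure sᶜ) isClosed_closure isClosed_closure
      (fun w _ ↦ (em (w ∈ s)).imp (subset_closure ·) (subset_closure (s := sᶜ) ·))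
      ⟨x, left_mem_segment ℝ x y, subset_closure hx⟩
      ⟨y, right_mem_segment ℝ x y, subset_closure hy⟩
    rw [← frontier_eq_closure_inter_closure] at hzs
    calc dist (g x) 0 = dist (g x) (g z) := by rw [h0 hzs, Pi.zero_apply]
      _ ≤ K * dist x z := hg.dist_le_mul x (subset_closure hx) z (frontier_subset_closure hzs)
      _ ≤ K * dist x y := by
        gcongr
        rw [dist_comm x z]
        exact segment_subset_closedBall_left x y hz
  refine LipschitzWith.of_dist_le_mul fun x y ↦ ?_
  by_cases hx : x ∈ s <;> by_cases hy : y ∈ s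
  · simpa only [indicator_of_mem, hx, hy] using
      hg.dist_le_mul x (subset_closure hx) y (subset_closure hy)
  · simpa only [indicator_of_mem hx, indicator_of_notMem hy] using hcross x hx y hy
  · simpa only [indicator_of_notMem hx, indicator_of_mem hy, dist_comm] using hcross y hy x hx
  · simp only [indicator_of_notMem hx, indicator_of_notMem hy, dist_self]
    positivity

theorem bijective_add_of_lipschitzWith {E : Type*} [NormedAddCommGroup E] [CompleteSpace E]
    {g : E → E} {K : ℝ≥0} (hK : K < 1) (hg : LipschitzWith K g) :
    Bijective fun x ↦ x + g x := by
  refine bijective_iff_existsUnique _ |>.2 fun y ↦ ?_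
  have hcontr : ContractingWith K fun x ↦ y - g x :=
    ⟨hK, by simpa using (LipschitzWith.const y).sub hg⟩
  have hiff : ∀ x, x + g x = y ↔ IsFixedPt (fun x ↦ y - g x) x := fun x ↦ by
    rw [IsFixedPt, sub_eq_iff_eq_add, eq_comm]
  simp only [hiff]
  exact ⟨_, hcontr.fixedPoint_isFixedPt, fun x hx ↦ hcontr.fixedPoint_unique hx⟩

theorem image_add_eq_of_lipschitzWith {E : Type*} [NormedAddCommGroup E] [CompleteSpace E]
    {g : E → E} {K : ℝ≥0} (hK : K < 1) (hg : LipschitzWith K g) {s : Set E}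
    (h0 : ∀ x ∉ s, g x = 0) : (fun x ↦ x + g x) '' s = s := by
  have hbij := bijective_add_of_lipschitzWith hK hg
  have hfix : ∀ x ∉ s, x + g x = x := fun x hx ↦ by rw [h0 x hx, add_zero]
  rw [← compl_inj_iff, ← image_compl_eq hbij]
  exact (image_congr hfix).trans (image_id' _)

end Lipschitz

section Volume

variable {E : Type*} [NormedAddCommGroup E] [NormedSpace ℝ E] [FiniteDimensional ℝ E]
  [MeasurableSpace E] [BorelSpace E] {μ : Measure E} [μ.IsAddHaarMeasure]
  {s : Set E} {g : E → E} {g' : E → E →L[ℝ] E} {K : ℝ≥0}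

theorem integrableOn_and_setIntegral_det_one_add_of_lt_one (hs : MeasurableSet s) (hμs : μ s ≠ ⊤)
    (hg : LipschitzWith K g) (hK : K < 1) (hg' : ∀ x ∈ s, HasFDerivAt g (g' x) x)
    (h0 : ∀ x ∉ s, g x = 0) :
    IntegrableOn (fun x ↦ (1 + g' x).det) s μ ∧ ∫ x in s, (1 + g' x).det ∂μ = μ.real s := by
  have hderiv : ∀ x ∈ s, HasFDerivWithinAt (fun x ↦ x + g x) (1 + g' x) s x := fun x hx ↦
    ((hasFDerivAt_id x).add (hg' x hx)).hasFDerivWithinAt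
  have hinj : InjOn (fun x ↦ x + g x) s := (bijective_add_of_lipschitzWith hK hg).injective.injOn
  have hdet : EqOn (fun x ↦ |(1 + g' x).det| • (1 : ℝ)) (fun x ↦ (1 + g' x).det) s := by
    intro x hx
    have hnorm : ‖g' x‖ < 1 := ((hg' x hx).le_of_lipschitz hg).trans_lt (mod_cast hK)
    simp only [smul_eq_mul, mul_one, abs_of_pos (det_one_add_pos_of_norm_lt_one hnorm)]
  have himage := image_add_eq_of_lipschitzWith hK hg h0
  constructor
  · rw [← integrableOn_congr_fun hdet hs,
      ← integrableOn_image_iff_integrableOn_abs_det_fderiv_smul μ hs hderiv hinj fun _ ↦ 1,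
      himage]
    exact integrableOn_const hμs
  · rw [← setIntegral_congr_fun hs hdet,
      ← integral_image_eq_integral_abs_det_fderiv_smul μ hs hderiv hinj fun _ ↦ 1,
      himage]
    simp

theorem setIntegral_det_one_add (hs : MeasurableSet s) (hμs : μ s ≠ ⊤) (hg : LipschitzWith K g)
    (hg' : ∀ x ∈ s, HasFDerivAt g (g' x) x) (h0 : ∀ x ∉ s, g x = 0) :
    ∫ x in s, (1 + g' x).det ∂μ = μ.real s := by
  have hinf : (Ioo (0 : ℝ) (1 / (K + 1))).Infinite := Ioo_infinite (by positivity)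
  obtain ⟨T, hTK, hTcard⟩ := hinf.exists_subset_card_eq (finrank ℝ E + 1)
  obtain ⟨w, hw⟩ := exists_weights_eval_eq_sum T (1 : ℝ)
  have hwsum : ∑ t ∈ T, w t = 1 := by
    simpa [hTcard] using (hw 1 (by rw [degree_one, hTcard]; exact_mod_cast Nat.succ_pos _)).symm
  have hdet : ∀ x, (1 + g' x).det = ∑ t ∈ T, w t * (1 + t • g' x).det := by
    intro x
    obtain ⟨p, hpdeg, hp⟩ := exists_polynomial_eval_eq_det_add_smul (g' x : E →ₗ[ℝ] E) 1
    have hdeg : p.degree < T.card :=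
      degree_le_natDegree.trans_lt (by rw [hTcard]; exact_mod_cast Nat.lt_succ_of_le hpdeg)
    have hp' : ∀ t, p.eval t = (1 + t • g' x).det := hp
    simpa only [hp', one_smul] using hw p hdeg
  have hsmall : ∀ t ∈ T, IntegrableOn (fun x ↦ (1 + t • g' x).det) s μ ∧
      ∫ x in s, (1 + t • g' x).det ∂μ = μ.real s := by
    intro t ht
    refine integrableOn_and_setIntegral_det_one_add_of_lt_one (g := t • g) (K := ‖t‖₊ * K) hs hμs
      ((lipschitzWith_smul t).comp hg) ?_ (fun x hx ↦ (hg' x hx).const_smul t)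
      fun x hx ↦ by rw [Pi.smul_apply, h0 x hx, smul_zero]
    obtain ⟨ht0, htK⟩ := hTK ht
    rw [← NNReal.coe_lt_coe, NNReal.coe_mul, coe_nnnorm, Real.norm_of_nonneg ht0.le, NNReal.coe_one]
    calc t * K < t * (K + 1) := by linarith
      _ < 1 := (lt_div_iff₀ (by positivity)).1 htK
  calc ∫ x in s, (1 + g' x).det ∂μ = ∫ x in s, ∑ t ∈ T, w t * (1 + t • g' x).det ∂μ := by
        simp only [hdet]
    _ = ∑ t ∈ T, w t * ∫ x in s, (1 + t • g' x).det ∂μ := by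
        rw [integral_finsetSum _ fun t ht ↦ (hsmall t ht).1.const_mul (w t)]
        simp only [integral_const_mul]
    _ = μ.real s := by
        rw [Finset.sum_congr rfl fun t ht ↦ by rw [(hsmall t ht).2], ← Finset.sum_mul, hwsum,
          one_mul]

theorem setIntegral_det_fderiv_of_eqOn_frontier {r : E → E} (hs : IsOpen s) (hμs : μ s ≠ ⊤)
    (hr : LipschitzOnWith K r (closure s)) (hd : DifferentiableOn ℝ r s)
    (hfix : EqOn r id (frontier s)) : ∫ x in s, (fderiv ℝ r x).det ∂μ = μ.real s := by
  have hlip : LipschitzWith (K + 1) (s.indicator (r - id)) :=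
    lipschitzWith_indicator_of_eqOn_frontier (hr.sub LipschitzWith.id.lipschitzOnWith)
      fun x hx ↦ by simp [hfix hx]
  have hderiv : ∀ x ∈ s, HasFDerivAt (s.indicator (r - id)) (fderiv ℝ r x - 1) x := fun x hx ↦
    ((hd.hasFDerivAt (hs.mem_nhds hx)).sub (hasFDerivAt_id x)).congr_of_eventuallyEq
      ((eqOn_indicator).eventuallyEq_of_mem (hs.mem_nhds hx))
  simpa only [add_sub_cancel] using
    setIntegral_det_one_add hs.measurableSet hμs hlip hderiv fun x hx ↦ indicator_of_notMem hx _

end Volume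

section FixedPoint

theorem exists_mem_ball_notMem_sphere_of_eqOn_sphere {E : Type*} [NormedAddCommGroup E]
    [InnerProductSpace ℝ E] [FiniteDimensional ℝ E] {r : E → E} {c : E} {R : ℝ} {K : ℝ≥0}
    (hR : 0 < R) (hr : LipschitzOnWith K r (closedBall c R)) (hd : DifferentiableOn ℝ r (ball c R))
    (hfix : EqOn r id (sphere c R)) : ∃ x ∈ ball c R, r x ∉ sphere c R := by
  borelize E
  by_contra! hmaps
  have hdet : EqOn (fun x ↦ (fderiv ℝ r x).det) 0 (ball c R) := fun x hx ↦
    det_fderiv_eq_zero_of_eventually_mem_sphere (hd.differentiableAt (isOpen_ball.mem_nhds hx))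
      hR.ne' (Filter.eventually_of_mem (isOpen_ball.mem_nhds hx) hmaps)
  have hvol := setIntegral_det_fderiv_of_eqOn_frontier (μ := Measure.addHaar) isOpen_ball
    measure_ball_lt_top.ne (by rwa [closure_ball c hR.ne']) hd (by rwa [frontier_ball c hR.ne'])
  rw [setIntegral_congr_fun measurableSet_ball hdet] at hvol
  have hpos : 0 < Measure.addHaar.real (ball c R) :=
    ENNReal.toReal_pos (measure_ball_pos _ c hR).ne' measure_ball_lt_top.ne
  exact hpos.ne (by simpa using hvol)

theorem exists_isFixedPt_of_contDiff {E : Type*} [NormedAddCommGroup E] [InnerProductSpace ℝ E]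
    [FiniteDimensional ℝ E] {f : E → E} (hf : ContDiff ℝ 1 f) (hfc : HasCompactSupport f) :
    ∃ x, IsFixedPt f x := by
  by_contra! hne
  have hne' : ∀ x, x - f x ≠ 0 := fun x h ↦ hne x (sub_eq_zero.1 h).symm
  obtain ⟨R, hR, hfR⟩ := hfc.isCompact.isBounded.subset_ball_lt 0 0
  let r : E → E := fun x ↦ (R / ‖x - f x‖) • (x - f x)
  have hr : ContDiff ℝ 1 r := by
    have hsub : ContDiff ℝ 1 fun x ↦ x - f x := contDiff_id.sub hf
    exact (contDiff_const.div (hsub.norm ℝ hne') fun x ↦ norm_ne_zero_iff.2 (hne' x)).smul hsub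
  have hrR : ∀ x, r x ∈ sphere 0 R := fun x ↦ by
    rw [mem_sphere_zero_iff_norm, norm_smul, norm_div, norm_norm, Real.norm_of_nonneg hR.le,
      div_mul_cancel₀ _ (norm_ne_zero_iff.2 (hne' x))]
  have hfix : EqOn r id (sphere 0 R) := fun x hx ↦ by
    have hfx : f x = 0 := image_eq_zero_of_notMem_tsupport fun h ↦
      (mem_ball.1 (hfR h)).ne (mem_sphere.1 hx)
    simp [r, hfx, mem_sphere_zero_iff_norm.1 hx, hR.ne']
  obtain ⟨K, hK⟩ := hr.locallyLipschitz.locallyLipschitzOn.exists_lipschitzOnWith_of_compact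
    (isCompact_closedBall (0 : E) R)
  obtain ⟨x, -, hx⟩ := exists_mem_ball_notMem_sphere_of_eqOn_sphere hR hK
    (hr.differentiable one_ne_zero).differentiableOn hfix
  exact hx (hrR x)

variable {E : Type*} [NormedAddCommGroup E] [NormedSpace ℝ E] [FiniteDimensional ℝ E] {f : E → E}

theorem exists_isFixedPt_of_hasCompactSupport (hf : Continuous f) (hfc : HasCompactSupport f) :
    ∃ x, IsFixedPt f x := by
  by_contra! hne
  let e : E ≃L[ℝ] EuclideanSpace ℝ (Fin (finrank ℝ E)) := toEuclidean
  -- If `dist (g x) (f x) < dist (f x) x` for all `x`, then `g` has no fixed point either.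
  obtain ⟨g, hg, hgf, hsupp⟩ := hf.exists_contDiff_approx 1 (hf.dist continuous_id)
    fun x ↦ dist_pos.2 (hne x)
  have hgc : HasCompactSupport g := hfc.mono hsupp
  obtain ⟨y, hy⟩ := exists_isFixedPt_of_contDiff (f := e ∘ g ∘ e.symm)
    (e.contDiff.comp (hg.comp e.symm.contDiff))
    ((hgc.comp_homeomorph e.symm.toHomeomorph).comp_left (map_zero e))
  have hgy : g (e.symm y) = e.symm y := by simpa using congr(e.symm $hy)
  have := hgf (e.symm y)
  rw [hgy, dist_comm] at this
  exact this.false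

theorem exists_isFixedPt_of_isBounded_range (hf : Continuous f)
    (hfb : Bornology.IsBounded (range f)) : ∃ x, IsFixedPt f x := by
  obtain ⟨R, hR, hfR⟩ := hfb.subset_ball_lt 0 0
  let χ : ContDiffBump (0 : E) := ⟨R, R + 1, hR, lt_add_one R⟩
  obtain ⟨x, hx⟩ := exists_isFixedPt_of_hasCompactSupport (χ.continuous.smul hf)
    χ.hasCompactSupport.smul_right
  have hxR : x ∈ closedBall 0 R := by
    rw [mem_closedBall_zero_iff]
    calc ‖x‖ = ‖χ x • f x‖ := congrArg norm hx.symm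
      _ ≤ ‖f x‖ := by
        rw [norm_smul, Real.norm_of_nonneg χ.nonneg]
        exact mul_le_of_le_one_left (norm_nonneg _) χ.le_one
      _ ≤ R := (mem_ball_zero_iff.1 (hfR (mem_range_self x))).le
  refine ⟨x, ?_⟩
  simpa only [IsFixedPt, Pi.smul_apply', χ.one_of_mem_closedBall hxR, one_smul] using hx

end FixedPoint

section Softmax

variable {A : Type*} [Fintype A]

/-- The logit choice rule: the probability vector with weights proportional to `exp (v a)`. -/
noncomputable def softmax (v : A → ℝ) (a : A) : ℝ :=
  Real.exp (v a) / ∑ b, Real.exp (v b)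

theorem continuous_softmax [Nonempty A] : Continuous (softmax : (A → ℝ) → A → ℝ) :=
  continuous_pi fun a ↦ Continuous.div (by fun_prop) (by fun_prop) fun _ ↦
    (Finset.sum_pos (fun _ _ ↦ Real.exp_pos _) Finset.univ_nonempty).ne'

theorem softmax_pos [Nonempty A] (v : A → ℝ) (a : A) : 0 < softmax v a :=
  div_pos (Real.exp_pos _) (Finset.sum_pos (fun _ _ ↦ Real.exp_pos _) Finset.univ_nonempty)

theorem softmax_mem_stdSimplex [Nonempty A] (v : A → ℝ) : softmax v ∈ stdSimplex ℝ A := by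
  refine ⟨fun a ↦ (softmax_pos v a).le, ?_⟩
  simp only [softmax, ← Finset.sum_div]
  exact div_self (Finset.sum_pos (fun _ _ ↦ Real.exp_pos _) Finset.univ_nonempty).ne'

theorem exists_softmax_eq_self [Nonempty A] {v : (A → ℝ) → A → ℝ}
    (hv : ContinuousOn v (stdSimplex ℝ A)) : ∃ β ∈ stdSimplex ℝ A, softmax (v β) = β := by
  obtain ⟨V, hV⟩ := ContinuousMap.exists_restrict_eq (isClosed_stdSimplex ℝ A)
    ⟨_, hv.domRestrict⟩
  obtain ⟨β, hβ⟩ := exists_isFixedPt_of_isBounded_range (continuous_softmax.comp V.continuous)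
    ((isCompact_stdSimplex ℝ A).isBounded.subset
      (range_subset_iff.2 fun β ↦ softmax_mem_stdSimplex (V β)))
  have hβmem : β ∈ stdSimplex ℝ A := hβ ▸ softmax_mem_stdSimplex (V β)
  have hVβ : V β = v β := congr($hV ⟨β, hβmem⟩)
  exact ⟨β, hβmem, hVβ ▸ hβ⟩

end Softmax

theorem stmt18_general {A : Type*} [Fintype A] [Nonempty A] (γ : ℝ)
    (u : (A → ℝ) → A → ℝ)
    (hu : ContinuousOn u {x : A → ℝ | (∀ a, 0 ≤ x a) ∧ ∑ a, x a = 1}) :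
    (∃ β : A → ℝ, (∀ a, 0 ≤ β a) ∧ (∑ a, β a = 1) ∧
      ∀ a, β a = Real.exp (γ * u β a) / ∑ a2, Real.exp (γ * u β a2)) ∧
    ∀ β : A → ℝ, ((∀ a, 0 ≤ β a) ∧ (∑ a, β a = 1) ∧
      ∀ a, β a = Real.exp (γ * u β a) / ∑ a2, Real.exp (γ * u β a2)) →
      ∀ a, 0 < β a := by
  constructor
  · obtain ⟨β, ⟨hβ0, hβ1⟩, hβ⟩ := exists_softmax_eq_self (hu.const_smul γ)
    exact ⟨β, hβ0, hβ1, fun a ↦ congr($hβ.symm a)⟩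
  · rintro β ⟨-, -, hβ⟩ a
    rw [hβ a]
    exact softmax_pos (γ • u β) a

/-- Existence of a logistic quantal-response fixed point; any such point is
    totally mixed. -/
theorem stmt18 {A : Type*} [Fintype A] [Nonempty A] (γ : ℝ) (hγ : 0 ≤ γ)
    (u : (A → ℝ) → A → ℝ)
    (hu : ContinuousOn u {x : A → ℝ | (∀ a, 0 ≤ x a) ∧ ∑ a, x a = 1}) :
    (∃ β : A → ℝ, (∀ a, 0 ≤ β a) ∧ (∑ a, β a = 1) ∧
      ∀ a, β a = Real.exp (γ * u β a) / ∑ a2, Real.exp (γ * u β a2)) ∧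
    ∀ β : A → ℝ, ((∀ a, 0 ≤ β a) ∧ (∑ a, β a = 1) ∧
      ∀ a, β a = Real.exp (γ * u β a) / ∑ a2, Real.exp (γ * u β a2)) →
      ∀ a, 0 < β a :=
  stmt18_general γ u hu
end
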